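/- arXiv:0707.1256 — 2 statements merged into one kernel-verified Lean document; each statement's English description precedes it below -/
import Mathlib

section
/- Let f : ℝ → ℝ be smooth. The map C([0,2π],ℝ) → M₂(ℝ), u ↦ Φ_{f'∘u}(2π), is infinitely Fréchet differentiable, and its Fréchet derivative at u is the continuous linear map v ↦ Φ(2π)·∫₀^{2π} f''(u(t))·v(t)·Φ(t)⁻¹·N₀·Φ(t) dt, where Φ = Φ_{f'∘u}. -/
open Real Set Matrix

attribute [local instance] Matrix.normedAddCommGroup Matrix.normedSpace

noncomputable section

/-- The matrix `N₀ = [[0,0],[1,0]]`. -/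
def N0 : Matrix (Fin 2) (Fin 2) ℝ := !![0, 0; 1, 0]

/-- Clamping map `ℝ → [0, 2π]`; it is the identity on `[0, 2π]`. -/
def clamp (t : ℝ) : Icc (0:ℝ) (2 * π) := Set.projIcc 0 (2 * π) (by positivity) t

/-!
The initial value problem `Φ' = A Φ`, `Φ(a) = 1` is the Volterra equation `Φ = 1 + ∫ₐ A Φ` in the
Banach space of continuous functions on `[a, b]`. If `‖A‖ ≤ c`, the `n`-th power of `Y ↦ ∫ₐ A Y` has
norm at most `(c (b - a))ⁿ / n!`, so `1 - ∫ₐ A` is invertible. As inversion is smooth on the units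
of a Banach algebra, `Φ = (1 - ∫ₐ A)⁻¹ 1` depends smoothly on `A`. Differentiating the integral
equation in the direction `B` gives `D = ∫ₐ (A D + B Φ)`, which variation of constants solves as
`D = Φ ∫ₐ Φ⁻¹ B Φ`. For `A = [[0, 1], [f' ∘ u, 0]]` it remains to apply the chain rule with the
superposition operator `u ↦ f' ∘ u`, whose derivative at `u` is multiplication by `f'' ∘ u`.
-/

section Nemytskii

variable {𝕜 X : Type*} [RCLike 𝕜] [TopologicalSpace X] [CompactSpace X]

section

variable {E F : Type*} [NormedAddCommGroup E] [NormedSpace 𝕜 E] [NormedAddCommGroup F]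
  [NormedSpace 𝕜 F]

variable (𝕜 X E F) in
/-- The pointwise application `(A, v) ↦ (x ↦ A x (v x))` of a continuous family of operators to a
continuous function, as a bounded bilinear map. It is the form taken by the derivative of a
superposition operator. -/
def pointwiseApply : C(X, E →L[𝕜] F) →L[𝕜] C(X, E) →L[𝕜] C(X, F) :=
  LinearMap.mkContinuous₂
    (LinearMap.mk₂ 𝕜
      (fun (A : C(X, E →L[𝕜] F)) (v : C(X, E)) =>
        (⟨fun x => A x (v x), A.continuous.clm_apply v.continuous⟩ : C(X, F)))
      (fun _ _ _ => rfl) (fun _ _ _ => rfl)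
      (fun A _ _ => ContinuousMap.ext fun x => map_add (A x) _ _)
      (fun c A _ => ContinuousMap.ext fun x => map_smul (A x) c _)) 1 fun A v => by
    refine (ContinuousMap.norm_le _ (by positivity)).2 fun x => ?_
    rw [one_mul]
    exact (A x).le_of_opNorm_le_of_le (A.norm_coe_le_norm x) (v.norm_coe_le_norm x)

lemma exists_forall_mem_ball_norm_sub_lt (g : C(E, F)) (u : C(X, E)) {ε : ℝ} (hε : 0 < ε) :
    ∃ δ > 0, ∀ x, ∀ y ∈ Metric.ball (u x) δ, ‖g y - g (u x)‖ < ε := by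
  have hcont : Continuous fun w : C(X, E) => g.comp w := g.continuous_postcomp
  obtain ⟨δ, hδ, hg⟩ := Metric.continuous_iff.1 hcont u ε hε
  refine ⟨δ, hδ, fun x y hy => ?_⟩
  have hdist : dist (u + ContinuousMap.const X (y - u x)) u < δ := by
    rw [dist_eq_norm, add_sub_cancel_left]
    exact ((ContinuousMap.norm_le _ (norm_nonneg _)).2 fun _ => le_rfl).trans_lt
      (mem_ball_iff_norm.1 hy)
  simpa [dist_eq_norm] using (ContinuousMap.dist_apply_le_dist x).trans_lt (hg _ hdist)

theorem hasFDerivAt_continuousMap_comp {g : C(E, F)} {g' : C(E, E →L[𝕜] F)}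
    (hg : ∀ x, HasFDerivAt g (g' x) x) (u : C(X, E)) :
    HasFDerivAt (fun w : C(X, E) => g.comp w) (pointwiseApply 𝕜 X E F (g'.comp u)) u := by
  let _ := NormedSpace.restrictScalars ℝ 𝕜 E
  rw [hasFDerivAt_iff_isLittleO, Asymptotics.isLittleO_iff]
  intro ε hε
  obtain ⟨δ, hδ, hg'⟩ := exists_forall_mem_ball_norm_sub_lt g' u hε
  filter_upwards [Metric.ball_mem_nhds u hδ] with w hw
  refine (ContinuousMap.norm_le _ (by positivity)).2 fun x => ?_
  have hwx : w x ∈ Metric.ball (u x) δ := (ContinuousMap.dist_apply_le_dist x).trans_lt hw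
  have mean_value : ‖g (w x) - g (u x) - g' (u x) (w x - u x)‖ ≤ ε * ‖w x - u x‖ :=
    (convex_ball (u x) δ).norm_image_sub_le_of_norm_hasFDerivWithin_le'
      (fun y _ => (hg y).hasFDerivWithinAt) (fun y hy => (hg' x y hy).le)
      (Metric.mem_ball_self hδ) hwx
  exact mean_value.trans (mul_le_mul_of_nonneg_left ((w - u).norm_coe_le_norm x) hε.le)

end

section

universe u

variable {E F : Type u} [NormedAddCommGroup E] [NormedSpace 𝕜 E] [NormedAddCommGroup F]
  [NormedSpace 𝕜 F]

theorem contDiff_continuousMap_comp {n : ℕ∞} {g : C(E, F)} (hg : ContDiff 𝕜 n g) :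
    ContDiff 𝕜 n (fun w : C(X, E) => g.comp w) := by
  suffices h : ∀ k : ℕ, ∀ {G : Type u} [NormedAddCommGroup G] [NormedSpace 𝕜 G] (g : C(E, G)),
      ContDiff 𝕜 k g → ContDiff 𝕜 k (fun w : C(X, E) => g.comp w) from
    contDiff_iff_forall_nat_le.2 fun k hk => h k g (hg.of_le (mod_cast hk))
  intro k
  induction k with
  | zero => exact fun g _ => contDiff_zero.2 (ContinuousMap.continuous_postcomp g)
  | succ k ih =>
    intro G _ _ g hg
    push_cast at hg ⊢
    obtain ⟨g', hg', hderiv⟩ := contDiff_succ_iff_hasFDerivAt.1 hg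
    exact contDiff_succ_iff_hasFDerivAt.2
      ⟨_, (pointwiseApply 𝕜 X E G).contDiff.comp (ih ⟨g', hg'.continuous⟩ hg'),
        hasFDerivAt_continuousMap_comp (g' := ⟨g', hg'.continuous⟩) hderiv⟩

end

end Nemytskii

section Volterra

open scoped NNReal Nat

lemma isUnit_one_sub_of_norm_pow_le {R : Type*} [NormedRing R] [CompleteSpace R] {x : R}
    {u : ℕ → ℝ} (hu : Summable u) (hx : ∀ n, ‖x ^ n‖ ≤ u n) : IsUnit (1 - x) :=
  have hsum : Summable (x ^ ·) := .of_norm_bounded hu hx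
  isUnit_iff_exists.2 ⟨_, hsum.one_sub_mul_tsum_pow, hsum.tsum_pow_mul_one_sub⟩

variable {F : Type*} [NormedAddCommGroup F] {a b : ℝ} (hab : a ≤ b)

lemma continuous_comp_projIcc (y : C(Icc a b, F)) : Continuous fun s => y (projIcc a b hab s) :=
  y.continuous.comp continuous_projIcc

lemma intervalIntegrable_comp_projIcc (y : C(Icc a b, F)) (s t : ℝ) :
    IntervalIntegrable (fun s => y (projIcc a b hab s)) MeasureTheory.volume s t :=
  (continuous_comp_projIcc hab y).intervalIntegrable s t

variable [NormedSpace ℝ F]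

/-- The integration operator `y ↦ (t ↦ ∫ₐᵗ y)` on `C([a, b], F)`; as in Mathlib's `IccExtend`, the
integrand is extended to `ℝ` by projecting onto `[a, b]`. -/
def primitive : C(Icc a b, F) →L[ℝ] C(Icc a b, F) :=
  LinearMap.mkContinuous
    { toFun y := ⟨fun t => ∫ s in a..t, y (projIcc a b hab s),
        (intervalIntegral.continuous_primitive
          (intervalIntegrable_comp_projIcc hab y) a).comp continuous_subtype_val⟩
      map_add' x y := ContinuousMap.ext fun t => intervalIntegral.integral_add
        (intervalIntegrable_comp_projIcc hab x a t) (intervalIntegrable_comp_projIcc hab y a t)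
      map_smul' c y := ContinuousMap.ext fun t => intervalIntegral.integral_smul c _ }
    (b - a) fun y => by
      refine (ContinuousMap.norm_le _ (mul_nonneg (sub_nonneg.2 hab) (norm_nonneg y))).2 fun t => ?_
      have hle := intervalIntegral.norm_integral_le_of_norm_le_const (a := a) (b := t)
        fun s _ => y.norm_coe_le_norm (projIcc a b hab s)
      rw [abs_of_nonneg (sub_nonneg.2 t.2.1), mul_comm] at hle
      exact hle.trans (by gcongr; exact t.2.2)

lemma primitive_apply (y : C(Icc a b, F)) (t : Icc a b) :
    primitive hab y t = ∫ s in a..t, y (projIcc a b hab s) := rfl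

lemma clm_primitive_apply {G : Type*} [NormedAddCommGroup G] [NormedSpace ℝ G] [CompleteSpace F]
    [CompleteSpace G] (L : F →L[ℝ] G) (y : C(Icc a b, F)) (t : Icc a b) :
    L (primitive hab y t) = ∫ s in a..t, L (y (projIcc a b hab s)) :=
  (L.intervalIntegral_comp_comm (intervalIntegrable_comp_projIcc hab y a t)).symm

lemma hasDerivWithinAt_of_eq_const_add_primitive [CompleteSpace F] {X p : C(Icc a b, F)} {c : F}
    (hX : X = .const _ c + primitive hab p) {t : ℝ} (ht : t ∈ Icc a b) :
    HasDerivWithinAt (fun s => X (projIcc a b hab s)) (p (projIcc a b hab t)) (Icc a b) t := by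
  have hderiv : HasDerivAt (fun r => c + ∫ s in a..r, p (projIcc a b hab s))
      (p (projIcc a b hab t)) t :=
    ((continuous_comp_projIcc hab p).integral_hasStrictDerivAt a t).hasDerivAt.const_add c
  have heq : EqOn (fun s => X (projIcc a b hab s))
      (fun r => c + ∫ s in a..r, p (projIcc a b hab s)) (Icc a b) := fun s hs => by
    simp [hX, primitive_apply, projIcc_of_mem hab hs]
  exact hderiv.hasDerivWithinAt.congr heq (heq ht)

lemma eq_const_add_primitive [CompleteSpace F] {X p : C(Icc a b, F)}
    (h : ∀ t ∈ Icc a b,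
      HasDerivWithinAt (fun s => X (projIcc a b hab s)) (p (projIcc a b hab t)) (Icc a b) t) :
    X = .const _ (X ⟨a, left_mem_Icc.2 hab⟩) + primitive hab p := by
  ext t
  have hsub : Icc a t ⊆ Icc a b := Icc_subset_Icc_right t.2.2
  have ftc := intervalIntegral.integral_eq_sub_of_hasDerivAt_of_le t.2.1
    (fun s hs => ((h s (hsub hs)).mono hsub).continuousWithinAt)
    (fun s hs => (h s (hsub (Ioo_subset_Icc_self hs))).hasDerivAt
      (Icc_mem_nhds hs.1 (hs.2.trans_le t.2.2)))
    (intervalIntegrable_comp_projIcc hab p a t)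
  rw [projIcc_val, projIcc_left] at ftc
  simp [primitive_apply, ftc]

/-- The `n`-th iterate is an integral over the simplex `a ≤ s₁ ≤ ⋯ ≤ sₙ ≤ t`, whence the `n!`. -/
lemma norm_primitive_comp_pow_apply_le {M : C(Icc a b, F) →L[ℝ] C(Icc a b, F)} {c : ℝ≥0}
    (hM : ∀ y t, ‖M y t‖ ≤ c * ‖y t‖) (n : ℕ) (y : C(Icc a b, F)) (t : Icc a b) :
    ‖((primitive hab ∘L M) ^ n) y t‖ ≤ (c * (t - a)) ^ n / n ! * ‖y‖ := by
  induction n generalizing t with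
  | zero => simpa using y.norm_coe_le_norm t
  | succ n ih =>
    rw [pow_succ']
    change ‖∫ s in a..t, M (((primitive hab ∘L M) ^ n) y) (projIcc a b hab s)‖ ≤ _
    have integrand_le : ∀ s ∈ Ioc a (t : ℝ),
        ‖M (((primitive hab ∘L M) ^ n) y) (projIcc a b hab s)‖ ≤
          c ^ (n + 1) * ‖y‖ / n ! * (s - a) ^ n := fun s hs => by
      rw [projIcc_of_mem hab ⟨hs.1.le, hs.2.trans t.2.2⟩]
      calc _ ≤ c * ((c * (s - a)) ^ n / n ! * ‖y‖) := (hM _ _).trans (by gcongr; exact ih _)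
        _ = _ := by rw [mul_pow]; ring
    have integral_bound : ∫ s in a..t, c ^ (n + 1) * ‖y‖ / n ! * (s - a) ^ n =
        (c * (t - a)) ^ (n + 1) / (n + 1)! * ‖y‖ := by
      rw [intervalIntegral.integral_const_mul,
        intervalIntegral.integral_comp_sub_right (fun s => s ^ n), integral_pow, sub_self,
        zero_pow n.succ_ne_zero, sub_zero, Nat.factorial_succ]
      push_cast
      rw [mul_pow]
      field_simp
    exact (intervalIntegral.norm_integral_le_of_norm_le t.2.1 (.of_forall integrand_le)
      (Continuous.intervalIntegrable (by fun_prop) _ _)).trans_eq integral_bound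

theorem isUnit_one_sub_primitive_comp [CompleteSpace F]
    {M : C(Icc a b, F) →L[ℝ] C(Icc a b, F)} {c : ℝ≥0} (hM : ∀ y t, ‖M y t‖ ≤ c * ‖y t‖) :
    IsUnit (1 - primitive hab ∘L M) := by
  have norm_pow_le : ∀ n, ‖(primitive hab ∘L M) ^ n‖ ≤ (c * (b - a)) ^ n / n ! := fun n => by
    have hbound : 0 ≤ (c * (b - a)) ^ n / n ! :=
      div_nonneg (pow_nonneg (mul_nonneg c.2 (sub_nonneg.2 hab)) n) (Nat.cast_nonneg _)
    refine ContinuousLinearMap.opNorm_le_bound _ hbound fun y => ?_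
    refine (ContinuousMap.norm_le _ (by positivity)).2 fun t => ?_
    have hta : 0 ≤ (t : ℝ) - a := sub_nonneg.2 t.2.1
    refine (norm_primitive_comp_pow_apply_le hab hM n y t).trans ?_
    gcongr
    exact t.2.2
  exact isUnit_one_sub_of_norm_pow_le (R := C(Icc a b, F) →L[ℝ] C(Icc a b, F))
    (Real.summable_pow_div_factorial _) norm_pow_le

theorem existsUnique_eq_add_primitive [CompleteSpace F]
    {M : C(Icc a b, F) →L[ℝ] C(Icc a b, F)} {c : ℝ≥0} (hM : ∀ y t, ‖M y t‖ ≤ c * ‖y t‖)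
    (k : C(Icc a b, F)) : ∃! X, X = k + primitive hab (M X) := by
  obtain ⟨R, hR, hR'⟩ := isUnit_iff_exists.1 (isUnit_one_sub_primitive_comp hab hM)
  refine ⟨R k, ?_, fun X hX => ?_⟩
  · exact eq_add_of_sub_eq (congrArg (· k) hR)
  · have hX' : (1 - primitive hab ∘L M) X = k := sub_eq_iff_eq_add.2 hX
    rw [← hX']
    exact (congrArg (· X) hR').symm

end Volterra

section FundamentalSolution

open scoped NNReal Ring

variable {𝔸 : Type*} [NormedRing 𝔸] [NormedAlgebra ℝ 𝔸] {a b : ℝ} (hab : a ≤ b)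

open ContinuousLinearMap (mul mulLeftRight)

lemma norm_mul_apply_le (A Y : C(Icc a b, 𝔸)) (t : Icc a b) :
    ‖mul ℝ _ A Y t‖ ≤ ‖A‖₊ * ‖Y t‖ :=
  (norm_mul_le (A t) (Y t)).trans (by gcongr; exact A.norm_coe_le_norm t)

lemma norm_mul_flip_apply_le (A Y : C(Icc a b, 𝔸)) (t : Icc a b) :
    ‖(mul ℝ _).flip A Y t‖ ≤ ‖A‖₊ * ‖Y t‖ := by
  rw [mul_comm]
  exact (norm_mul_le (Y t) (A t)).trans (by gcongr; exact A.norm_coe_le_norm t)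

/-- The solution on `[a, b]` of `Φ' = A Φ`, `Φ(a) = 1`, for a continuous coefficient `A` with values
in a Banach algebra. It is obtained by solving the integral equation `Φ = 1 + ∫ₐ A Φ`. -/
def fundamentalSolution (A : C(Icc a b, 𝔸)) : C(Icc a b, 𝔸) :=
  (1 - primitive hab ∘L mul ℝ _ A)⁻¹ʳ 1

variable [CompleteSpace 𝔸]

lemma mul_eq_const_add_primitive {X Y p r : C(Icc a b, 𝔸)} {c d : 𝔸}
    (hX : X = .const _ c + primitive hab p) (hY : Y = .const _ d + primitive hab r) :
    X * Y = .const _ (c * d) + primitive hab (p * Y + X * r) := by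
  have hinit : (X * Y) ⟨a, left_mem_Icc.2 hab⟩ = c * d := by
    simp [hX, hY, primitive_apply]
  rw [← hinit]
  exact eq_const_add_primitive hab fun t ht =>
    (hasDerivWithinAt_of_eq_const_add_primitive hab hX ht).mul
      (hasDerivWithinAt_of_eq_const_add_primitive hab hY ht)

theorem eq_fundamentalSolution_iff {A X : C(Icc a b, 𝔸)} :
    X = fundamentalSolution hab A ↔ X = 1 + primitive hab (A * X) := by
  have hunit := isUnit_one_sub_primitive_comp hab (norm_mul_apply_le A)
  rw [← sub_eq_iff_eq_add]
  constructor
  · rintro rfl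
    exact congrArg (· 1) (Ring.mul_inverse_cancel _ hunit)
  · intro hX
    have hX' : (1 - primitive hab ∘L mul ℝ _ A) X = 1 := hX
    rw [fundamentalSolution, ← hX']
    exact (congrArg (· X) (Ring.inverse_mul_cancel _ hunit)).symm

lemma fundamentalSolution_eq (A : C(Icc a b, 𝔸)) :
    fundamentalSolution hab A = 1 + primitive hab (A * fundamentalSolution hab A) :=
  (eq_fundamentalSolution_iff hab).1 rfl

lemma eq_of_eq_add_primitive_mul {A k X Y : C(Icc a b, 𝔸)}
    (hX : X = k + primitive hab (A * X)) (hY : Y = k + primitive hab (A * Y)) : X = Y :=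
  (existsUnique_eq_add_primitive hab (norm_mul_apply_le A) k).unique hX hY

lemma eq_one_of_eq_one_add_primitive_commutator {A X : C(Icc a b, 𝔸)}
    (hX : X = 1 + primitive hab (A * X - X * A)) : X = 1 := by
  have commutator_le (Y : C(Icc a b, 𝔸)) (t : Icc a b) :
      ‖(mul ℝ _ A - (mul ℝ _).flip A) Y t‖ ≤ (‖A‖₊ + ‖A‖₊ : ℝ≥0) * ‖Y t‖ := by
    rw [NNReal.coe_add, add_mul]
    exact (norm_sub_le _ _).trans
      (add_le_add (norm_mul_apply_le A Y t) (norm_mul_flip_apply_le A Y t))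
  refine (existsUnique_eq_add_primitive hab commutator_le 1).unique hX ?_
  simp

/-- The inverse is the solution `Ψ` of `Ψ' = -Ψ A`, `Ψ(a) = 1`: the product rule gives `(Ψ Φ)' = 0`,
while `Φ Ψ` and `1` both solve `X' = A X - X A`. -/
theorem isUnit_fundamentalSolution (A : C(Icc a b, 𝔸)) : IsUnit (fundamentalSolution hab A) := by
  set Φ := fundamentalSolution hab A
  have hΦ : Φ = .const _ 1 + primitive hab (A * Φ) := fundamentalSolution_eq hab A
  obtain ⟨Ψ, hΨ, -⟩ :=
    existsUnique_eq_add_primitive hab (M := (mul ℝ _).flip (-A)) (norm_mul_flip_apply_le (-A)) 1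
  replace hΨ : Ψ = .const _ 1 + primitive hab (Ψ * -A) := hΨ
  have left_inverse : Ψ * Φ = 1 := by
    have h := mul_eq_const_add_primitive hab hΨ hΦ
    have cancel : Ψ * -A * Φ + Ψ * (A * Φ) = 0 := by ext; simp [mul_assoc]
    rwa [cancel, map_zero, add_zero, mul_one] at h
  have right_inverse : Φ * Ψ = 1 := by
    refine eq_one_of_eq_one_add_primitive_commutator hab (A := A) ?_
    have h := mul_eq_const_add_primitive hab hΦ hΨ
    have commutator : A * Φ * Ψ + Φ * (Ψ * -A) = A * (Φ * Ψ) - Φ * Ψ * A := by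
      ext; simp [mul_assoc, sub_eq_add_neg]
    rwa [commutator, mul_one] at h
  exact isUnit_iff_exists.2 ⟨Ψ, right_inverse, left_inverse⟩

theorem eq_fundamentalSolution_mul_primitive {A k D : C(Icc a b, 𝔸)}
    (hD : D = primitive hab (A * D + k)) :
    D = fundamentalSolution hab A * primitive hab ((fundamentalSolution hab A)⁻¹ʳ * k) := by
  have hunit := isUnit_fundamentalSolution hab A
  set Φ := fundamentalSolution hab A
  have hΦ : Φ = .const _ 1 + primitive hab (A * Φ) := fundamentalSolution_eq hab A
  set Y := primitive hab (Φ⁻¹ʳ * k)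
  have hY : Y = .const _ 0 + primitive hab (Φ⁻¹ʳ * k) := (zero_add _).symm
  have hΦY : Φ * Y = primitive hab (A * (Φ * Y) + k) := by
    have h := mul_eq_const_add_primitive hab hΦ hY
    rw [Ring.mul_inverse_cancel_left _ _ hunit, mul_assoc, mul_zero] at h
    exact h.trans (zero_add _)
  refine eq_of_eq_add_primitive_mul hab (A := A) (k := primitive hab k) ?_ ?_
  · rwa [add_comm, ← map_add]
  · rwa [add_comm, ← map_add]

theorem contDiff_fundamentalSolution {n : WithTop ℕ∞} :
    ContDiff ℝ n (fundamentalSolution hab : C(Icc a b, 𝔸) → C(Icc a b, 𝔸)) := by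
  have hmul : ContDiff ℝ n (mul ℝ C(Icc a b, 𝔸)) :=
    ContinuousLinearMap.contDiff (E := C(Icc a b, 𝔸)) (F := C(Icc a b, 𝔸) →L[ℝ] C(Icc a b, 𝔸)) _
  have hop : ContDiff ℝ n fun A : C(Icc a b, 𝔸) => 1 - primitive hab ∘L mul ℝ _ A :=
    contDiff_const.sub (contDiff_const.clm_comp hmul)
  refine ContDiff.clm_apply (contDiff_iff_contDiffAt.2 fun A => ?_) contDiff_const
  obtain ⟨w, hw⟩ := isUnit_one_sub_primitive_comp hab (norm_mul_apply_le A)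
  have hinv := contDiffAt_ringInverse ℝ (n := n) (R := C(Icc a b, 𝔸) →L[ℝ] C(Icc a b, 𝔸)) w
  rw [hw] at hinv
  exact hinv.comp A hop.contDiffAt

theorem hasFDerivAt_fundamentalSolution (A : C(Icc a b, 𝔸)) :
    HasFDerivAt (fundamentalSolution hab)
      (mul ℝ _ (fundamentalSolution hab A) ∘L primitive hab ∘L
        mulLeftRight ℝ _ (fundamentalSolution hab A)⁻¹ʳ (fundamentalSolution hab A)) A := by
  set Φ := fundamentalSolution hab A
  set D := fderiv ℝ (fundamentalSolution hab) A
  have hD : HasFDerivAt (fundamentalSolution hab) D A :=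
    ((contDiff_fundamentalSolution hab (n := 1)).differentiable one_ne_zero A).hasFDerivAt
  have linearized (B : C(Icc a b, 𝔸)) : D B = primitive hab (A * D B + B * Φ) := by
    have hrhs : HasFDerivAt (fun A => 1 + primitive hab (A * fundamentalSolution hab A))
        (primitive hab ∘L (mul ℝ _ A ∘L D + (mul ℝ _).flip Φ)) A := by
      have product_rule : HasFDerivAt (fun A => A * fundamentalSolution hab A)
          (mul ℝ _ A ∘L D + (mul ℝ _).flip Φ) A :=
        ((hasFDerivAt_id (𝕜 := ℝ) A).mul' hD).congr_fderiv (by ext; simp [Φ])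
      exact ((ContinuousLinearMap.hasFDerivAt (𝕜 := ℝ) (E := C(Icc a b, 𝔸))
        (F := C(Icc a b, 𝔸)) (primitive hab)).comp A product_rule).const_add 1
    rw [← funext (fundamentalSolution_eq hab)] at hrhs
    exact congrArg (fun L : C(Icc a b, 𝔸) →L[ℝ] C(Icc a b, 𝔸) => L B) (hD.unique hrhs)
  refine hD.congr_fderiv (ContinuousLinearMap.ext fun B => ?_)
  rw [eq_fundamentalSolution_mul_primitive hab (linearized B), ← mul_assoc]
  rfl

section Superposition

variable {E : Type*} [NormedAddCommGroup E] [NormedSpace ℝ E]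

theorem hasFDerivAt_fundamentalSolution_comp {A : C(E, 𝔸)} {A' : C(E, E →L[ℝ] 𝔸)}
    (hA : ∀ x, HasFDerivAt A (A' x) x) (u : C(Icc a b, E)) :
    HasFDerivAt (fun w : C(Icc a b, E) => fundamentalSolution hab (A.comp w))
      (mul ℝ _ (fundamentalSolution hab (A.comp u)) ∘L primitive hab ∘L
        mulLeftRight ℝ _ (fundamentalSolution hab (A.comp u))⁻¹ʳ
          (fundamentalSolution hab (A.comp u)) ∘L
        pointwiseApply ℝ (Icc a b) E 𝔸 (A'.comp u)) u :=
  (hasFDerivAt_fundamentalSolution hab (A.comp u)).comp u (hasFDerivAt_continuousMap_comp hA u)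

end Superposition

end FundamentalSolution

section MatrixSystem

open scoped Ring

variable {ι : Type*} [Fintype ι] [DecidableEq ι] {a b : ℝ} (hab : a ≤ b)

/-- Matrices as operators on `ι → ℝ`. Since the entrywise sup norm on matrices is not
submultiplicative, the Banach algebra of operators is the setting in which the matrix equation
`Φ' = A Φ` is solved. -/
def matrixEquivCLM : Matrix ι ι ℝ ≃ₐ[ℝ] ((ι → ℝ) →L[ℝ] ι → ℝ) :=
  Matrix.toLinAlgEquiv'.trans (Module.End.toContinuousLinearMap (ι → ℝ))

/-- `matrixEquivCLM` as a homeomorphism for the sup norm and the operator norm. -/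
def matrixContinuousEquivCLM : Matrix ι ι ℝ ≃L[ℝ] ((ι → ℝ) →L[ℝ] ι → ℝ) :=
  matrixEquivCLM.toLinearEquiv.toContinuousLinearEquiv

/-- A continuous family of matrices as a continuous family of operators. -/
def operatorFamily {X : Type*} [TopologicalSpace X] (A : C(X, Matrix ι ι ℝ)) :
    C(X, (ι → ℝ) →L[ℝ] ι → ℝ) :=
  ⟨fun x => matrixContinuousEquivCLM (A x), matrixContinuousEquivCLM.continuous.comp A.continuous⟩

lemma operatorFamily_apply {X : Type*} [TopologicalSpace X] (A : C(X, Matrix ι ι ℝ)) (x : X) :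
    operatorFamily A x = matrixEquivCLM (A x) := rfl

/-- The fundamental matrix on `[a, b]` of the linear system with coefficient matrix `A`, normalised
to be the identity at `a`. -/
def fundamentalMatrix (A : C(Icc a b, Matrix ι ι ℝ)) (t : Icc a b) : Matrix ι ι ℝ :=
  matrixEquivCLM.symm (fundamentalSolution hab (operatorFamily A) t)

theorem eq_fundamentalMatrix {A : C(Icc a b, Matrix ι ι ℝ)} {Φ : ℝ → Matrix ι ι ℝ} (hΦa : Φ a = 1)
    (hΦ : ∀ t ∈ Icc a b, ∀ i j, HasDerivWithinAt (fun s => Φ s i j)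
      ((A (projIcc a b hab t) * Φ t) i j) (Icc a b) t) (t : Icc a b) :
    Φ t = fundamentalMatrix hab A t := by
  have hderiv : ∀ t ∈ Icc a b, HasDerivWithinAt Φ (A (projIcc a b hab t) * Φ t) (Icc a b) t :=
    fun t ht => hasDerivWithinAt_pi.2 fun i => hasDerivWithinAt_pi.2 fun j => hΦ t ht i j
  let Ψ : C(Icc a b, Matrix ι ι ℝ) := ⟨fun t => Φ t,
    continuousOn_iff_continuous_domRestrict.1 fun t ht => (hderiv t ht).continuousWithinAt⟩
  have hΨ : operatorFamily Ψ =
      .const _ 1 + primitive hab (operatorFamily A * operatorFamily Ψ) := by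
    have hinit : operatorFamily Ψ ⟨a, left_mem_Icc.2 hab⟩ = 1 := by
      rw [operatorFamily_apply, ← map_one matrixEquivCLM, ← hΦa]
      rfl
    rw [← hinit]
    refine eq_const_add_primitive hab fun t ht => ?_
    have hprod : (operatorFamily A * operatorFamily Ψ) (projIcc a b hab t) =
        matrixEquivCLM (A (projIcc a b hab t) * Φ t) := by
      rw [projIcc_of_mem hab ht]
      exact (map_mul matrixEquivCLM _ _).symm
    rw [hprod]
    have hcomp : HasDerivWithinAt (fun s => matrixEquivCLM (Φ s))
        (matrixEquivCLM (A (projIcc a b hab t) * Φ t)) (Icc a b) t :=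
      (matrixContinuousEquivCLM (ι := ι)).hasFDerivAt.comp_hasDerivWithinAt t (hderiv t ht)
    exact hcomp.congr_of_mem (fun s hs => by rw [projIcc_of_mem hab hs]; rfl) ht
  rw [fundamentalMatrix, ← (eq_fundamentalSolution_iff hab).2 hΨ]
  exact (matrixEquivCLM.symm_apply_apply _).symm

lemma matrixEquivCLM_symm_primitive_apply (Y : C(Icc a b, (ι → ℝ) →L[ℝ] ι → ℝ)) (t : Icc a b) :
    matrixEquivCLM.symm (primitive hab Y t) =
      Matrix.of fun i j => ∫ s in a..t, matrixEquivCLM.symm (Y (projIcc a b hab s)) i j :=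
  Matrix.ext fun i j => clm_primitive_apply hab
    ((Matrix.entryLinearMap ℝ ℝ i j).toContinuousLinearMap ∘L
      matrixContinuousEquivCLM.symm.toContinuousLinearMap) Y t

lemma matrixEquivCLM_symm_ringInverse_apply {X : C(Icc a b, (ι → ℝ) →L[ℝ] ι → ℝ)} (hX : IsUnit X)
    (t : Icc a b) : matrixEquivCLM.symm (X⁻¹ʳ t) = (matrixEquivCLM.symm (X t))⁻¹ := by
  refine (Matrix.inv_eq_left_inv ?_).symm
  rw [← map_mul, ← ContinuousMap.mul_apply, Ring.inverse_mul_cancel _ hX, ContinuousMap.one_apply,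
    map_one]

variable {E : Type*} [NormedAddCommGroup E] [NormedSpace ℝ E]

theorem exists_hasFDerivAt_fundamentalMatrix_comp {A : C(E, Matrix ι ι ℝ)} (hA : ContDiff ℝ 1 A)
    (u : C(Icc a b, E)) (t : Icc a b) :
    ∃ L : C(Icc a b, E) →L[ℝ] Matrix ι ι ℝ,
      HasFDerivAt (fun w : C(Icc a b, E) => fundamentalMatrix hab (A.comp w) t) L u ∧
      ∀ v, L v = fundamentalMatrix hab (A.comp u) t * Matrix.of fun i j => ∫ s in a..t,
        ((fundamentalMatrix hab (A.comp u) (projIcc a b hab s))⁻¹ *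
          fderiv ℝ A (u (projIcc a b hab s)) (v (projIcc a b hab s)) *
          fundamentalMatrix hab (A.comp u) (projIcc a b hab s)) i j := by
  let B' : C(E, E →L[ℝ] (ι → ℝ) →L[ℝ] ι → ℝ) :=
    ⟨fun x => matrixContinuousEquivCLM.toContinuousLinearMap ∘L fderiv ℝ A x,
      continuous_const.clm_comp (hA.continuous_fderiv one_ne_zero)⟩
  have hB' (x : E) : HasFDerivAt (operatorFamily A) (B' x) x :=
    (matrixContinuousEquivCLM (ι := ι)).hasFDerivAt.comp x
      (hA.differentiable one_ne_zero x).hasFDerivAt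
  let toMatrix : C(Icc a b, (ι → ℝ) →L[ℝ] ι → ℝ) →L[ℝ] Matrix ι ι ℝ :=
    matrixContinuousEquivCLM.symm.toContinuousLinearMap ∘L ContinuousMap.evalCLM ℝ t
  refine ⟨_, HasFDerivAt.comp (g := toMatrix)
    (f := fun w : C(Icc a b, E) => fundamentalSolution hab (operatorFamily (A.comp w))) u
    toMatrix.hasFDerivAt (hasFDerivAt_fundamentalSolution_comp hab hB' u), fun v => ?_⟩
  set X := fundamentalSolution hab ((operatorFamily A).comp u)
  have hX : IsUnit X := isUnit_fundamentalSolution hab _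
  let K := pointwiseApply ℝ (Icc a b) E _ (B'.comp u) v
  have hK (s : Icc a b) : matrixEquivCLM.symm (K s) = fderiv ℝ A (u s) (v s) :=
    matrixEquivCLM.symm_apply_apply _
  change matrixEquivCLM.symm (X t * primitive hab (X⁻¹ʳ * K * X) t) = _
  rw [map_mul, matrixEquivCLM_symm_primitive_apply]
  simp only [ContinuousMap.mul_apply, map_mul, matrixEquivCLM_symm_ringInverse_apply hX, hK]
  rfl

end MatrixSystem

section General

universe u

variable {E : Type u} [NormedAddCommGroup E] [NormedSpace ℝ E] {ι : Type u} [Fintype ι]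
  [DecidableEq ι] {a b : ℝ} (hab : a ≤ b) {n : ℕ∞}

theorem contDiff_fundamentalMatrix_comp {A : C(E, Matrix ι ι ℝ)} (hA : ContDiff ℝ n A)
    (t : Icc a b) :
    ContDiff ℝ n fun u : C(Icc a b, E) => fundamentalMatrix hab (A.comp u) t := by
  have hB : ContDiff ℝ n (operatorFamily A) :=
    (matrixContinuousEquivCLM (ι := ι)).contDiff.comp hA
  exact (matrixContinuousEquivCLM.symm.toContinuousLinearMap ∘L
    ContinuousMap.evalCLM ℝ t).contDiff.comp
      ((contDiff_fundamentalSolution hab).comp (contDiff_continuousMap_comp hB))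

theorem stmt_6_general (hn : 1 ≤ n) {A : E → Matrix ι ι ℝ} (hA : ContDiff ℝ n A)
    (Φ : C(Icc a b, E) → ℝ → Matrix ι ι ℝ) (hΦa : ∀ u, Φ u a = 1)
    (hΦ : ∀ u, ∀ t ∈ Icc a b, ∀ i j, HasDerivWithinAt (fun s => Φ u s i j)
      ((A (u (projIcc a b hab t)) * Φ u t) i j) (Icc a b) t) :
    ContDiff ℝ n (fun u => Φ u b) ∧
    ∀ u, ∃ L : C(Icc a b, E) →L[ℝ] Matrix ι ι ℝ, HasFDerivAt (fun u' => Φ u' b) L u ∧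
      ∀ v, L v = Φ u b * Matrix.of fun i j => ∫ t in a..b,
        ((Φ u t)⁻¹ * fderiv ℝ A (u (projIcc a b hab t)) (v (projIcc a b hab t)) * Φ u t) i j := by
  let A' : C(E, Matrix ι ι ℝ) := ⟨A, hA.continuous⟩
  have hΦ_eq (u : C(Icc a b, E)) (t : Icc a b) : Φ u t = fundamentalMatrix hab (A'.comp u) t :=
    eq_fundamentalMatrix hab (hΦa u) (hΦ u) t
  let b' : Icc a b := ⟨b, right_mem_Icc.2 hab⟩
  have hΦb : (fun u => Φ u b) = fun u => fundamentalMatrix hab (A'.comp u) b' :=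
    funext fun u => hΦ_eq u b'
  rw [hΦb]
  refine ⟨contDiff_fundamentalMatrix_comp hab hA _, fun u => ?_⟩
  obtain ⟨L, hL, hLv⟩ := exists_hasFDerivAt_fundamentalMatrix_comp hab (A := A')
    (hA.of_le (mod_cast hn)) u b'
  refine ⟨L, hL, fun v => ?_⟩
  rw [hLv v, ← hΦ_eq]
  congr 2
  ext i j
  refine intervalIntegral.integral_congr fun t ht => ?_
  rw [uIcc_of_le hab] at ht
  simp only [← hΦ_eq, projIcc_of_mem hab ht]
  rfl

end General

lemma coefficientMatrix_eq (r : ℝ) : !![0, 1; r, 0] = N0ᵀ + r • N0 := by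
  ext i j
  fin_cases i <;> fin_cases j <;> simp [N0]

lemma contDiff_coefficientMatrix {n : WithTop ℕ∞} {q : ℝ → ℝ} (hq : ContDiff ℝ n q) :
    ContDiff ℝ n fun x => !![0, 1; q x, 0] := by
  simp only [coefficientMatrix_eq]
  exact contDiff_const.add (hq.smul contDiff_const)

lemma fderiv_coefficientMatrix_apply {q : ℝ → ℝ} {x : ℝ} (hq : DifferentiableAt ℝ q x) (y : ℝ) :
    fderiv ℝ (fun x => !![0, 1; q x, 0]) x y = (deriv q x * y) • N0 := by
  have hderiv : HasDerivAt (fun x => !![0, 1; q x, 0]) (deriv q x • N0) x := by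
    simp only [coefficientMatrix_eq]
    exact (hq.hasDerivAt.smul_const N0).const_add N0ᵀ
  rw [hderiv.hasFDerivAt.fderiv]
  simp [smul_smul, mul_comm]

/-- Proposition 3.1(a). For smooth `f`, the matrix-level nonlinear
monodromy map `u ↦ Φ_{f'∘u}(2π)` on `C([0,2π],ℝ)` is smooth (infinitely Fréchet
differentiable), with Fréchet derivative at `u` given by
`v ↦ Φ(2π)·∫₀^{2π} f''(u(t))·v(t)·Φ(t)⁻¹·N₀·Φ(t) dt`, where `Φ = Φ_{f'∘u}`. -/
theorem stmt_6 (f : ℝ → ℝ) (hf : ContDiff ℝ (⊤ : ℕ∞) f)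
    -- `Φ u` is the fundamental matrix of the potential `f' ∘ u`:
    (Φ : C(Icc (0:ℝ) (2 * π), ℝ) → ℝ → Matrix (Fin 2) (Fin 2) ℝ)
    (hΦ0 : ∀ u, Φ u 0 = 1)
    (hΦ : ∀ u, ∀ t ∈ Icc (0:ℝ) (2 * π), ∀ i j,
      HasDerivWithinAt (fun s => Φ u s i j)
        ((!![0, 1; deriv f (u (clamp t)), 0] * Φ u t) i j) (Icc 0 (2 * π)) t) :
    ContDiff ℝ (⊤ : ℕ∞) (fun u : C(Icc (0:ℝ) (2 * π), ℝ) => Φ u (2 * π)) ∧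
    ∀ u : C(Icc (0:ℝ) (2 * π), ℝ),
      ∃ L : C(Icc (0:ℝ) (2 * π), ℝ) →L[ℝ] Matrix (Fin 2) (Fin 2) ℝ,
        HasFDerivAt (fun u' => Φ u' (2 * π)) L u ∧
        ∀ v : C(Icc (0:ℝ) (2 * π), ℝ),
          L v = Φ u (2 * π) *
            Matrix.of (fun i j : Fin 2 =>
              ∫ t in (0:ℝ)..(2 * π),
                deriv (deriv f) (u (clamp t)) * v (clamp t) *
                  (((Φ u t)⁻¹ * N0 * Φ u t) i j)) := by
  have hf' : ContDiff ℝ (⊤ : ℕ∞) (deriv f) := (contDiff_infty_iff_deriv.1 hf).2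
  obtain ⟨hsmooth, hderiv⟩ :=
    stmt_6_general two_pi_pos.le le_top (contDiff_coefficientMatrix hf') Φ hΦ0 hΦ
  refine ⟨hsmooth, fun u => ?_⟩
  obtain ⟨L, hL, hLv⟩ := hderiv u
  have hfderiv (x : ℝ) := fderiv_coefficientMatrix_apply (hf'.differentiable (by simp) x)
  exact ⟨L, hL, fun v => by simp [hLv, hfderiv, clamp]⟩
end
end

section
/- Let f : ℝ → ℝ be a smooth function with nowhere flat derivative f'. For every E > 0 there exists ε > 0 with the following property: for every continuous u : [0,2π] → ℝ with sup|u| < E, every closed interval I ⊆ (0,2π) of length less than ε such that f''(u(t)) ≠ 0 for all t ∈ I, and all bumps ℓ₁, ℓ₂, ℓ₃ with pairwise disjoint supports contained in I, the three matrices ∫₀^{2π} f''(u(t))·ℓᵢ(t)·Φ(t)⁻¹·N₀·Φ(t) dt, i = 1,2,3, where Φ = Φ_{f'∘u}, are linearly independent in M₂(ℝ). -/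
open Real Set Matrix

/-- A smooth function is nowhere flat if some derivative of order `r' ≤ r` (for a
uniform `r`) is nonzero at every point. -/
def NowhereFlat (g : ℝ → ℝ) : Prop :=
  ∃ r : ℕ, 0 < r ∧ ∀ x : ℝ, ∃ r' : ℕ, 0 < r' ∧ r' ≤ r ∧ iteratedDeriv r' g x ≠ 0

/-- A bump: a smooth nonnegative function, not identically zero, whose support is a
closed subinterval of `I`. -/
def IsBump (ℓ : ℝ → ℝ) (I : Set ℝ) : Prop :=
  ContDiff ℝ (⊤ : ℕ∞) ℓ ∧ (∀ x, 0 ≤ ℓ x) ∧ ℓ ≠ 0 ∧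
    ∃ a b : ℝ, a ≤ b ∧ Icc a b ⊆ I ∧ tsupport ℓ = Icc a b

/-! Write `p = Φ₀₁` and `q = Φ₀₀` for the first row of `Φ`. Since `det Φ = 1`, the entries of
`Φ⁻¹ N₀ Φ` are `q²`, `p q`, `p²` up to sign, so linear independence amounts to
`det (∫ f''(u) ℓᵢ pᵏ q²⁻ᵏ) ≠ 0`. Were it zero, some fixed combination `f''(u) ∑ vₖ pᵏ q²⁻ᵏ` would
integrate to zero against every `ℓᵢ`, hence vanish at a point `tᵢ` of each support by the mean value
theorem. Then the homogeneous Vandermonde determinant of the points `(p tᵢ, q tᵢ)` is zero, so the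
solution `q(s) p - p(s) q` of `y'' = f'(u) y` has two zeros in `I`, which is impossible if `I` is
short. -/

open MeasureTheory Function

section Disconjugacy

theorem norm_le_mul_length_of_hasDerivWithinAt {E : Type*} [NormedAddCommGroup E]
    [NormedSpace ℝ E] {g g' : ℝ → E} {C s t x₀ x : ℝ}
    (hg : ∀ y ∈ Icc s t, HasDerivWithinAt g (g' y) (Icc s t) y)
    (hbound : ∀ y ∈ Icc s t, ‖g' y‖ ≤ C) (hx₀ : x₀ ∈ Icc s t) (hgx₀ : g x₀ = 0)
    (hx : x ∈ Icc s t) : ‖g x‖ ≤ C * (t - s) := by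
  have hC : 0 ≤ C := (norm_nonneg _).trans (hbound x hx)
  calc ‖g x‖ = ‖g x - g x₀‖ := by rw [hgx₀, sub_zero]
    _ ≤ C * ‖x - x₀‖ :=
      (convex_Icc s t).norm_image_sub_le_of_norm_hasDerivWithin_le hg hbound hx₀ hx
    _ ≤ C * (t - s) := mul_le_mul_of_nonneg_left (Real.dist_le_of_mem_Icc hx hx₀) hC

variable {y y' q : ℝ → ℝ} {K s t : ℝ}

/- By Rolle `y'` also has a zero, so integrating `y'' = q y` twice bounds `m = max |y|` by
`K (t - s)² m`. -/
theorem eq_zero_of_hill_of_boundary_eq_zero (hst : s < t) (hlen : K * (t - s) ^ 2 < 1)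
    (hy : ∀ x ∈ Icc s t, HasDerivWithinAt y (y' x) (Icc s t) x)
    (hy' : ∀ x ∈ Icc s t, HasDerivWithinAt y' (q x * y x) (Icc s t) x)
    (hq : ∀ x ∈ Icc s t, |q x| ≤ K) (hys : y s = 0) (hyt : y t = 0) :
    ∀ x ∈ Icc s t, y x = 0 ∧ y' x = 0 := by
  have hs : s ∈ Icc s t := left_mem_Icc.2 hst.le
  have hy_cont : ContinuousOn y (Icc s t) := fun x hx => (hy x hx).continuousWithinAt
  obtain ⟨ξ, hξ, hy'ξ⟩ : ∃ ξ ∈ Ioo s t, y' ξ = 0 :=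
    exists_hasDerivAt_eq_zero hst hy_cont (hys.trans hyt.symm) fun x hx =>
      (hy x (Ioo_subset_Icc_self hx)).hasDerivAt (Icc_mem_nhds hx.1 hx.2)
  obtain ⟨x₀, hx₀, hmax⟩ := isCompact_Icc.exists_isMaxOn ⟨s, hs⟩ hy_cont.abs
  have hK : 0 ≤ K := (abs_nonneg _).trans (hq s hs)
  have hy''_le : ∀ x ∈ Icc s t, ‖q x * y x‖ ≤ K * |y x₀| := fun x hx => by
    rw [norm_mul]
    exact mul_le_mul (hq x hx) (hmax hx) (norm_nonneg _) hK
  have hy'_le : ∀ x ∈ Icc s t, ‖y' x‖ ≤ K * |y x₀| * (t - s) := fun x hx =>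
    norm_le_mul_length_of_hasDerivWithinAt hy' hy''_le (Ioo_subset_Icc_self hξ) hy'ξ hx
  have hmax_le : |y x₀| ≤ K * |y x₀| * (t - s) * (t - s) :=
    norm_le_mul_length_of_hasDerivWithinAt hy hy'_le hs hys hx₀
  have hmax_eq : |y x₀| = 0 := by nlinarith [abs_nonneg (y x₀)]
  refine fun x hx => ⟨abs_nonpos_iff.1 (hmax_eq ▸ hmax hx), norm_le_zero_iff.1 ?_⟩
  simpa only [hmax_eq, mul_zero, zero_mul] using hy'_le x hx

end Disconjugacy

/-- `Φ` is a matrix solution on `S` of the first-order system of Hill's equation `y'' = q y`; the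
derivative is taken entry by entry, within `S`. -/
def IsHillMatrixSolution (q : ℝ → ℝ) (S : Set ℝ) (Φ : ℝ → Matrix (Fin 2) (Fin 2) ℝ) : Prop :=
  ∀ t ∈ S, ∀ i j, HasDerivWithinAt (fun s => Φ s i j) ((!![0, 1; q t, 0] * Φ t) i j) S t

namespace IsHillMatrixSolution

variable {q : ℝ → ℝ} {S S' : Set ℝ} {Φ : ℝ → Matrix (Fin 2) (Fin 2) ℝ} {K a b s t : ℝ}

theorem mono (hΦ : IsHillMatrixSolution q S Φ) (h : S' ⊆ S) : IsHillMatrixSolution q S' Φ :=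
  fun t ht i j => (hΦ t (h ht) i j).mono h

theorem hasDerivWithinAt_row_zero (hΦ : IsHillMatrixSolution q S Φ) (ht : t ∈ S) (j : Fin 2) :
    HasDerivWithinAt (fun s => Φ s 0 j) (Φ t 1 j) S t := by
  simpa [Matrix.mul_apply, Fin.sum_univ_two] using hΦ t ht 0 j

theorem hasDerivWithinAt_row_one (hΦ : IsHillMatrixSolution q S Φ) (ht : t ∈ S) (j : Fin 2) :
    HasDerivWithinAt (fun s => Φ s 1 j) (q t * Φ t 0 j) S t := by
  simpa [Matrix.mul_apply, Fin.sum_univ_two] using hΦ t ht 1 j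

theorem continuousOn_row_zero (hΦ : IsHillMatrixSolution q S Φ) (j : Fin 2) :
    ContinuousOn (fun s => Φ s 0 j) S :=
  fun _ ht => (hΦ.hasDerivWithinAt_row_zero ht j).continuousWithinAt

theorem det_eq_det (hΦ : IsHillMatrixSolution q S Φ) (hS : Convex ℝ S) (hs : s ∈ S)
    (ht : t ∈ S) : (Φ t).det = (Φ s).det := by
  have hderiv : ∀ x ∈ S, HasDerivWithinAt (fun x => (Φ x).det) 0 S x := fun x hx => by
    simp only [det_fin_two]
    refine (((hΦ.hasDerivWithinAt_row_zero hx 0).mul (hΦ.hasDerivWithinAt_row_one hx 1)).sub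
      ((hΦ.hasDerivWithinAt_row_zero hx 1).mul (hΦ.hasDerivWithinAt_row_one hx 0))).congr_deriv ?_
    ring
  have h := hS.norm_image_sub_le_of_norm_hasDerivWithin_le (C := 0) hderiv (by simp) hs ht
  rwa [zero_mul, norm_le_zero_iff, sub_eq_zero] at h

theorem row_zero_mul_ne_mul_of_lt (hΦ : IsHillMatrixSolution q (Icc s t) Φ) (hdet : (Φ s).det ≠ 0)
    (hq : ∀ x ∈ Icc s t, |q x| ≤ K) (hlen : K * (t - s) ^ 2 < 1) (hst : s < t) :
    Φ s 0 1 * Φ t 0 0 ≠ Φ t 0 1 * Φ s 0 0 := by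
  intro h
  have hzero := eq_zero_of_hill_of_boundary_eq_zero (q := q) (K := K)
    (y := fun x => Φ s 0 0 * Φ x 0 1 - Φ s 0 1 * Φ x 0 0)
    (y' := fun x => Φ s 0 0 * Φ x 1 1 - Φ s 0 1 * Φ x 1 0) hst hlen
    (fun x hx => ((hΦ.hasDerivWithinAt_row_zero hx 1).const_mul _).sub
      ((hΦ.hasDerivWithinAt_row_zero hx 0).const_mul _))
    (fun x hx => (((hΦ.hasDerivWithinAt_row_one hx 1).const_mul _).sub
      ((hΦ.hasDerivWithinAt_row_one hx 0).const_mul _)).congr_deriv (by ring))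
    hq (by ring) (by linear_combination -h)
  exact hdet ((det_fin_two (Φ s)).trans (hzero s (left_mem_Icc.2 hst.le)).2)

theorem row_zero_mul_ne_mul_of_ne (hΦ : IsHillMatrixSolution q (Icc a b) Φ)
    (hdet : ∀ x ∈ Icc a b, (Φ x).det ≠ 0) (hq : ∀ x ∈ Icc a b, |q x| ≤ K)
    (hlen : K * (b - a) ^ 2 < 1) (hs : s ∈ Icc a b) (ht : t ∈ Icc a b) (hst : s ≠ t) :
    Φ s 0 1 * Φ t 0 0 ≠ Φ t 0 1 * Φ s 0 0 := by
  wlog hlt : s < t generalizing s t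
  · exact (this ht hs hst.symm (hst.lt_or_gt.resolve_left hlt)).symm
  have hsub : Icc s t ⊆ Icc a b := Icc_subset_Icc hs.1 ht.2
  have hK : 0 ≤ K := (abs_nonneg _).trans (hq s hs)
  have hlen' : K * (t - s) ^ 2 < 1 := hlen.trans_le' <| by
    gcongr
    exacts [ht.2, hs.1]
  exact (hΦ.mono hsub).row_zero_mul_ne_mul_of_lt (hdet s hs) (fun x hx => hq x (hsub hx)) hlen' hlt

end IsHillMatrixSolution

/-- The weights supported in `S` for which the mean value theorem finds its point inside the support
of the weight; the bumps of `IsBump` are examples. -/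
structure IsConnectedWeight {X : Type*} [TopologicalSpace X] (ℓ : X → ℝ) (S : Set X) : Prop where
  continuous : Continuous ℓ
  nonneg : 0 ≤ ℓ
  ne_zero : ℓ ≠ 0
  isPreconnected_tsupport : IsPreconnected (tsupport ℓ)
  tsupport_subset : tsupport ℓ ⊆ S

theorem IsBump.isConnectedWeight {ℓ : ℝ → ℝ} {S : Set ℝ} (hℓ : IsBump ℓ S) :
    IsConnectedWeight ℓ S := by
  obtain ⟨hsmooth, hnonneg, hne, c, d, -, hsub, hsupp⟩ := hℓ
  exact ⟨hsmooth.continuous, hnonneg, hne, hsupp ▸ isPreconnected_Icc, hsupp ▸ hsub⟩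

namespace IsConnectedWeight

variable {X : Type*} [TopologicalSpace X] {ℓ h : X → ℝ} {S : Set X}

theorem hasCompactSupport (hℓ : IsConnectedWeight ℓ S) (hS : IsCompact S) : HasCompactSupport ℓ :=
  hS.of_isClosed_subset (isClosed_tsupport ℓ) hℓ.tsupport_subset

theorem isConnected_tsupport (hℓ : IsConnectedWeight ℓ S) : IsConnected (tsupport ℓ) :=
  ⟨(support_nonempty_iff.2 hℓ.ne_zero).mono (subset_tsupport ℓ), hℓ.isPreconnected_tsupport⟩

variable [MeasurableSpace X] {μ : Measure X}

section Integrable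

variable [OpensMeasurableSpace X] [IsFiniteMeasureOnCompacts μ]

theorem integrable_mul (hℓ : IsConnectedWeight ℓ S) (hS : IsCompact S) (hh : ContinuousOn h S) :
    Integrable (fun x => ℓ x * h x) μ := by
  have hcont : ContinuousOn (fun x => ℓ x * h x) (tsupport ℓ) :=
    hℓ.continuous.continuousOn.mul (hh.mono hℓ.tsupport_subset)
  have hint : IntegrableOn (fun x => ℓ x * h x) (tsupport ℓ) μ :=
    hcont.integrableOn_compact' (hℓ.hasCompactSupport hS) (isClosed_tsupport ℓ).measurableSet
  exact hint.integrable_of_forall_notMem_eq_zero fun x hx => by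
    rw [image_eq_zero_of_notMem_tsupport hx, zero_mul]

theorem integral_pos [μ.IsOpenPosMeasure] (hℓ : IsConnectedWeight ℓ S) (hS : IsCompact S) :
    0 < ∫ x, ℓ x ∂μ := by
  obtain ⟨x, hx⟩ := ne_iff.1 hℓ.ne_zero
  exact hℓ.continuous.integral_pos_of_hasCompactSupport_nonneg_nonzero
    (hℓ.hasCompactSupport hS) hℓ.nonneg hx

theorem exists_mem_tsupport_integral_mul_eq (hℓ : IsConnectedWeight ℓ S) (hS : IsCompact S)
    (hh : ContinuousOn h S) :
    ∃ x ∈ tsupport ℓ, ∫ y, ℓ y * h y ∂μ = h x * ∫ y, ℓ y ∂μ := by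
  have hℓ_int : Integrable ℓ μ :=
    hℓ.continuous.integrable_of_hasCompactSupport (hℓ.hasCompactSupport hS)
  have hprod_int : Integrable (fun x => h x * ℓ x) μ := by
    simpa only [mul_comm] using hℓ.integrable_mul hS hh
  obtain ⟨x, hx, hmean⟩ := exists_eq_const_mul_setIntegral_of_nonneg hℓ.isConnected_tsupport
    (isClosed_tsupport ℓ).measurableSet (hh.mono hℓ.tsupport_subset) hℓ_int.integrableOn
    hprod_int.integrableOn fun y _ => hℓ.nonneg y
  refine ⟨x, hx, ?_⟩
  have hℓ_zero : ∀ y ∉ tsupport ℓ, ℓ y = 0 := fun y hy => image_eq_zero_of_notMem_tsupport hy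
  rw [setIntegral_eq_integral_of_forall_compl_eq_zero hℓ_zero,
    setIntegral_eq_integral_of_forall_compl_eq_zero fun y hy => by
      rw [hℓ_zero y hy, mul_zero]] at hmean
  simpa only [mul_comm] using hmean

end Integrable

end IsConnectedWeight

section Chebyshev

variable {X : Type*} [TopologicalSpace X] [MeasurableSpace X] [OpensMeasurableSpace X]
  {μ : Measure X} [IsFiniteMeasureOnCompacts μ] [μ.IsOpenPosMeasure] {S : Set X}

theorem det_integral_mul_ne_zero {ι : Type*} [Fintype ι] [DecidableEq ι] {ℓ φ : ι → X → ℝ}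
    (hS : IsCompact S) (hℓ : ∀ i, IsConnectedWeight (ℓ i) S) (hφ : ∀ k, ContinuousOn (φ k) S)
    (hdet : ∀ x : ι → X, (∀ i, x i ∈ tsupport (ℓ i)) → (of fun i k => φ k (x i)).det ≠ 0) :
    (of fun i k => ∫ x, ℓ i x * φ k x ∂μ).det ≠ 0 := by
  intro hzero
  obtain ⟨v, hv, hMv⟩ := exists_mulVec_eq_zero_iff.2 hzero
  have hcomb_cont : ContinuousOn (fun x => ∑ k, φ k x * v k) S :=
    continuousOn_finsetSum _ fun k _ => (hφ k).mul continuousOn_const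
  have hcomb_integral (i : ι) : ∫ x, ℓ i x * ∑ k, φ k x * v k ∂μ = 0 := by
    calc ∫ x, ℓ i x * ∑ k, φ k x * v k ∂μ = ∫ x, ∑ k, ℓ i x * φ k x * v k ∂μ := by
          simp only [Finset.mul_sum, mul_assoc]
      _ = ∑ k, (∫ x, ℓ i x * φ k x ∂μ) * v k := by
          rw [integral_finsetSum _ fun k _ => ((hℓ i).integrable_mul hS (hφ k)).mul_const _]
          simp only [integral_mul_const]
      _ = 0 := congrFun hMv i
  have hcomb_zero (i : ι) : ∃ x ∈ tsupport (ℓ i), ∑ k, φ k x * v k = 0 := by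
    obtain ⟨x, hx, hmean⟩ := (hℓ i).exists_mem_tsupport_integral_mul_eq (μ := μ) hS hcomb_cont
    rw [hcomb_integral i, eq_comm, mul_eq_zero] at hmean
    exact ⟨x, hx, hmean.resolve_right ((hℓ i).integral_pos hS).ne'⟩
  choose x hx hxv using hcomb_zero
  exact hdet x hx (exists_mulVec_eq_zero_iff.1 ⟨v, hv, funext hxv⟩)

theorem det_projVandermonde_ne_zero {R : Type*} [CommRing R] [IsDomain R] {n : ℕ}
    {v w : Fin n → R} (h : ∀ i j, i ≠ j → v i * w j ≠ v j * w i) :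
    (projVandermonde v w).det ≠ 0 := by
  rw [det_projVandermonde]
  exact Finset.prod_ne_zero_iff.2 fun i _ => Finset.prod_ne_zero_iff.2 fun j hj =>
    sub_ne_zero.2 (h j i (Finset.mem_Ioi.1 hj).ne')

theorem det_integral_homogeneous_ne_zero {n : ℕ} {ℓ : Fin n → X → ℝ} {g p q : X → ℝ}
    (hS : IsCompact S) (hℓ : ∀ i, IsConnectedWeight (ℓ i) S)
    (hdisj : Pairwise fun i j => Disjoint (tsupport (ℓ i)) (tsupport (ℓ j)))
    (hg : ContinuousOn g S) (hp : ContinuousOn p S) (hq : ContinuousOn q S)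
    (hg_ne : ∀ x ∈ S, g x ≠ 0) (hpq : ∀ x ∈ S, ∀ y ∈ S, x ≠ y → p x * q y ≠ p y * q x) :
    (of fun i (k : Fin n) => ∫ x, ℓ i x * (g x * (p x ^ k.1 * q x ^ k.rev.1)) ∂μ).det ≠ 0 := by
  refine det_integral_mul_ne_zero (φ := fun (k : Fin n) x => g x * (p x ^ k.1 * q x ^ k.rev.1)) hS
    hℓ (fun k => hg.mul ((hp.pow _).mul (hq.pow _))) fun x hx => ?_
  have hxS (i : Fin n) : x i ∈ S := (hℓ i).tsupport_subset (hx i)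
  have hdet : (projVandermonde (fun i => p (x i)) fun i => q (x i)).det ≠ 0 :=
    det_projVandermonde_ne_zero fun i j hij =>
      hpq _ (hxS i) _ (hxS j) ((hdisj hij).ne_of_mem (hx i) (hx j))
  have hprod : ∏ i, g (x i) ≠ 0 := Finset.prod_ne_zero_iff.2 fun i _ => hg_ne _ (hxS i)
  exact (det_mul_column (fun i => g (x i)) _).trans_ne (mul_ne_zero hprod hdet)

end Chebyshev

/-- The traceless matrix with given coordinates, ordered so that the conjugate of `N0` by a matrix
of determinant one with first row `(q, p)` has coordinates `q ^ 2, p * q, p ^ 2`. -/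
def tracelessMatrix : (Fin 3 → ℝ) →ₗ[ℝ] Matrix (Fin 2) (Fin 2) ℝ where
  toFun v := !![-v 1, -v 2; v 0, v 1]
  map_add' v w := by ext i j; fin_cases i <;> fin_cases j <;> simp [add_comm]
  map_smul' c v := by ext i j; fin_cases i <;> fin_cases j <;> simp

theorem tracelessMatrix_apply (v : Fin 3 → ℝ) :
    tracelessMatrix v = !![-v 1, -v 2; v 0, v 1] :=
  rfl

theorem ker_tracelessMatrix : LinearMap.ker tracelessMatrix = ⊥ := by
  refine LinearMap.ker_eq_bot'.2 fun v hv => ?_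
  have hentry (i j : Fin 2) := congrFun (congrFun hv i) j
  ext k
  fin_cases k
  · simpa [tracelessMatrix_apply] using hentry 1 0
  · simpa [tracelessMatrix_apply] using hentry 1 1
  · simpa [tracelessMatrix_apply] using hentry 0 1

theorem inv_mul_N0_mul_eq_tracelessMatrix {A : Matrix (Fin 2) (Fin 2) ℝ} (hA : A.det = 1) :
    A⁻¹ * N0 * A = tracelessMatrix fun k => A 0 1 ^ k.1 * A 0 0 ^ k.rev.1 := by
  rw [inv_def, hA, adjugate_fin_two, tracelessMatrix_apply]
  ext i j
  fin_cases i <;> fin_cases j <;> simp [N0, Matrix.mul_apply, Fin.sum_univ_two, pow_two, mul_comm]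

theorem integral_mul_tracelessMatrix {X : Type*} [MeasurableSpace X] {μ : Measure X} (c : X → ℝ)
    (γ : X → Fin 3 → ℝ) :
    (of fun i j => ∫ x, c x * tracelessMatrix (γ x) i j ∂μ) =
      tracelessMatrix fun k => ∫ x, c x * γ x k ∂μ := by
  ext i j
  fin_cases i <;> fin_cases j <;> simp [tracelessMatrix_apply, integral_neg]

section Monodromy

variable {Φ : ℝ → Matrix (Fin 2) (Fin 2) ℝ} {a b T : ℝ}

theorem intervalIntegral_conj_N0_eq_tracelessMatrix {ℓ g : ℝ → ℝ} (ha : 0 < a) (hb : b ≤ T)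
    (hℓ : tsupport ℓ ⊆ Icc a b) (hdet : ∀ t ∈ Icc a b, (Φ t).det = 1) :
    (of fun i j => ∫ t in (0:ℝ)..T, g t * ℓ t * ((Φ t)⁻¹ * N0 * Φ t) i j) =
      tracelessMatrix fun k =>
        ∫ t, ℓ t * (g t * (Φ t 0 1 ^ k.1 * Φ t 0 0 ^ k.rev.1)) := by
  have hℓ_zero : ∀ t ∉ Icc a b, ℓ t = 0 := fun t ht =>
    image_eq_zero_of_notMem_tsupport fun h => ht (hℓ h)
  have hintegrand (i j : Fin 2) (t : ℝ) : g t * ℓ t * ((Φ t)⁻¹ * N0 * Φ t) i j =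
      ℓ t * g t * tracelessMatrix (fun k => Φ t 0 1 ^ k.1 * Φ t 0 0 ^ k.rev.1) i j := by
    by_cases ht : t ∈ Icc a b
    · rw [inv_mul_N0_mul_eq_tracelessMatrix (hdet t ht), mul_comm (g t)]
    · rw [hℓ_zero t ht, mul_zero, zero_mul, zero_mul, zero_mul]
  simp only [hintegrand, ← mul_assoc (ℓ _) (g _)]
  rw [← integral_mul_tracelessMatrix]
  ext i j
  refine intervalIntegral.integral_eq_integral_of_support_subset fun t ht => ?_
  have ht' : t ∈ Icc a b := by
    by_contra h
    exact ht (by simp only [hℓ_zero t h, zero_mul])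
  exact ⟨ha.trans_le ht'.1, ht'.2.trans hb⟩

theorem linearIndependent_integral_conj_N0 {q g : ℝ → ℝ} {K : ℝ} {ℓ : Fin 3 → ℝ → ℝ}
    (ha : 0 < a) (hb : b ≤ T) (hΦ : IsHillMatrixSolution q (Icc a b) Φ)
    (hdet : ∀ t ∈ Icc a b, (Φ t).det = 1) (hq : ∀ t ∈ Icc a b, |q t| ≤ K)
    (hlen : K * (b - a) ^ 2 < 1) (hg : ContinuousOn g (Icc a b)) (hg_ne : ∀ t ∈ Icc a b, g t ≠ 0)
    (hℓ : ∀ i, IsConnectedWeight (ℓ i) (Icc a b))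
    (hdisj : Pairwise fun i j => Disjoint (tsupport (ℓ i)) (tsupport (ℓ j))) :
    LinearIndependent ℝ fun m => of fun i j : Fin 2 =>
      ∫ t in (0:ℝ)..T, g t * ℓ m t * ((Φ t)⁻¹ * N0 * Φ t) i j := by
  have hdet_ne : ∀ t ∈ Icc a b, (Φ t).det ≠ 0 := fun t ht => (hdet t ht).trans_ne one_ne_zero
  have hmoments := det_integral_homogeneous_ne_zero (μ := volume) isCompact_Icc hℓ hdisj hg
    (hΦ.continuousOn_row_zero 1) (hΦ.continuousOn_row_zero 0) hg_ne fun s hs t ht =>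
      hΦ.row_zero_mul_ne_mul_of_ne hdet_ne hq hlen hs ht
  simp only [intervalIntegral_conj_N0_eq_tracelessMatrix ha hb (hℓ _).tsupport_subset hdet]
  exact (linearIndependent_rows_of_det_ne_zero hmoments).map' tracelessMatrix ker_tracelessMatrix

end Monodromy

theorem exists_pos_forall_abs_lt_mul_sq_lt_one (K : ℝ) :
    ∃ ε > 0, ∀ x : ℝ, |x| < ε → K * x ^ 2 < 1 := by
  have hcont : Continuous fun x : ℝ => K * x ^ 2 := by fun_prop
  have hlim : Filter.Tendsto (fun x : ℝ => K * x ^ 2) (nhds 0) (nhds 0) :=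
    hcont.tendsto' 0 0 (by simp)
  simpa only [dist_zero_right, Real.norm_eq_abs] using
    Metric.eventually_nhds_iff.1 (hlim.eventually_lt_const one_pos)

theorem stmt_9_general {f : ℝ → ℝ} (hf : ContDiff ℝ 2 f) (E : ℝ) :
    ∃ ε > 0, ∀ (T : ℝ) (u : ℝ → ℝ) (a b : ℝ), 0 < a → a ≤ b → b ≤ T → b - a < ε →
      ContinuousOn u (Icc a b) → (∀ t ∈ Icc a b, |u t| ≤ E) →
      (∀ t ∈ Icc a b, deriv (deriv f) (u t) ≠ 0) →
      ∀ ℓ₁ ℓ₂ ℓ₃ : ℝ → ℝ, IsConnectedWeight ℓ₁ (Icc a b) → IsConnectedWeight ℓ₂ (Icc a b) →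
        IsConnectedWeight ℓ₃ (Icc a b) →
        Disjoint (tsupport ℓ₁) (tsupport ℓ₂) →
        Disjoint (tsupport ℓ₁) (tsupport ℓ₃) →
        Disjoint (tsupport ℓ₂) (tsupport ℓ₃) →
        ∀ Φ : ℝ → Matrix (Fin 2) (Fin 2) ℝ, Φ 0 = 1 →
          IsHillMatrixSolution (fun t => deriv f (u t)) (Icc 0 T) Φ →
          LinearIndependent ℝ
            ![of fun i j : Fin 2 => ∫ t in (0:ℝ)..T,
                deriv (deriv f) (u t) * ℓ₁ t * (((Φ t)⁻¹ * N0 * Φ t) i j),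
              of fun i j : Fin 2 => ∫ t in (0:ℝ)..T,
                deriv (deriv f) (u t) * ℓ₂ t * (((Φ t)⁻¹ * N0 * Φ t) i j),
              of fun i j : Fin 2 => ∫ t in (0:ℝ)..T,
                deriv (deriv f) (u t) * ℓ₃ t * (((Φ t)⁻¹ * N0 * Φ t) i j)] := by
  have hf' : ContDiff ℝ 1 (deriv f) := hf.deriv'
  have hf'' : Continuous (deriv (deriv f)) := hf'.continuous_deriv le_rfl
  obtain ⟨K, hK⟩ :=
    (isCompact_Icc (a := -E) (b := E)).exists_bound_of_continuousOn hf'.continuous.continuousOn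
  obtain ⟨ε, hε, hlen⟩ := exists_pos_forall_abs_lt_mul_sq_lt_one K
  refine ⟨ε, hε, fun T u a b ha hab hb hba hu huE hne ℓ₁ ℓ₂ ℓ₃ h₁ h₂ h₃ h₁₂ h₁₃ h₂₃ Φ hΦ0 hΦ => ?_⟩
  have hsub : Icc a b ⊆ Icc 0 T := Icc_subset_Icc ha.le hb
  have hdet : ∀ t ∈ Icc a b, (Φ t).det = 1 := fun t ht => by
    rw [hΦ.det_eq_det (convex_Icc 0 T) (left_mem_Icc.2 (ha.le.trans (hab.trans hb))) (hsub ht),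
      hΦ0, det_one]
  have hℓ : ∀ i, IsConnectedWeight (![ℓ₁, ℓ₂, ℓ₃] i) (Icc a b) := by
    simpa [Fin.forall_fin_succ] using ⟨h₁, h₂, h₃⟩
  have hdisj : Pairwise fun i j => Disjoint (tsupport (![ℓ₁, ℓ₂, ℓ₃] i))
      (tsupport (![ℓ₁, ℓ₂, ℓ₃] j)) := by
    simp [Pairwise, Fin.forall_fin_succ, h₁₂, h₁₃, h₂₃, h₁₂.symm, h₁₃.symm, h₂₃.symm]
  convert! linearIndependent_integral_conj_N0 ha hb (hΦ.mono hsub) hdet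
    (fun t ht => hK _ (abs_le.1 (huE t ht))) (hlen _ (by rwa [abs_of_nonneg (sub_nonneg.2 hab)]))
    (hf''.comp_continuousOn hu) hne hℓ hdisj using 1
  ext m
  fin_cases m <;> rfl

/-- Proposition 3.2. For `f` smooth with nowhere flat `f'` and any
bound `E` there is `ε > 0` such that for any continuous `u` with `sup|u| < E`, any
closed interval `I ⊆ (0,2π)` of length `< ε` on which `f''∘u` does not vanish, and any
three bumps with pairwise disjoint supports in `I`, the matrices
`∫₀^{2π} f''(u(t))·ℓᵢ(t)·Φ(t)⁻¹·N₀·Φ(t) dt` are linearly independent. -/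
theorem stmt_9 (f : ℝ → ℝ) (hf : ContDiff ℝ (⊤ : ℕ∞) f) (hnf : NowhereFlat (deriv f))
    (E : ℝ) (hE : 0 < E) :
    ∃ ε > 0, ∀ u : ℝ → ℝ, ContinuousOn u (Icc 0 (2 * π)) →
      (∀ t ∈ Icc (0:ℝ) (2 * π), |u t| < E) →
      ∀ a b : ℝ, 0 < a → a ≤ b → b < 2 * π → b - a < ε →
      (∀ t ∈ Icc a b, deriv (deriv f) (u t) ≠ 0) →
      ∀ ℓ₁ ℓ₂ ℓ₃ : ℝ → ℝ,
        IsBump ℓ₁ (Icc a b) → IsBump ℓ₂ (Icc a b) → IsBump ℓ₃ (Icc a b) →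
        Disjoint (tsupport ℓ₁) (tsupport ℓ₂) →
        Disjoint (tsupport ℓ₁) (tsupport ℓ₃) →
        Disjoint (tsupport ℓ₂) (tsupport ℓ₃) →
        -- `Φ` the fundamental matrix of the potential `f' ∘ u` on `[0,2π]`:
        ∀ Φ : ℝ → Matrix (Fin 2) (Fin 2) ℝ,
          Φ 0 = 1 →
          (∀ t ∈ Icc (0:ℝ) (2 * π), ∀ i j, HasDerivWithinAt (fun s => Φ s i j)
            ((!![0, 1; deriv f (u t), 0] * Φ t) i j) (Icc 0 (2 * π)) t) →
          LinearIndependent ℝ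
            ![Matrix.of fun i j : Fin 2 => ∫ t in (0:ℝ)..(2 * π),
                deriv (deriv f) (u t) * ℓ₁ t * (((Φ t)⁻¹ * N0 * Φ t) i j),
              Matrix.of fun i j : Fin 2 => ∫ t in (0:ℝ)..(2 * π),
                deriv (deriv f) (u t) * ℓ₂ t * (((Φ t)⁻¹ * N0 * Φ t) i j),
              Matrix.of fun i j : Fin 2 => ∫ t in (0:ℝ)..(2 * π),
                deriv (deriv f) (u t) * ℓ₃ t * (((Φ t)⁻¹ * N0 * Φ t) i j)] := by
  obtain ⟨ε, hε, h⟩ := stmt_9_general (hf.of_le (WithTop.coe_le_coe.2 le_top)) E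
  refine ⟨ε, hε, fun u hu huE a b ha hab hb hba hne ℓ₁ ℓ₂ ℓ₃ h₁ h₂ h₃ => ?_⟩
  have hsub : Icc a b ⊆ Icc 0 (2 * π) := Icc_subset_Icc ha.le hb.le
  exact h (2 * π) u a b ha hab hb.le hba (hu.mono hsub) (fun t ht => (huE t (hsub ht)).le) hne
    ℓ₁ ℓ₂ ℓ₃ h₁.isConnectedWeight h₂.isConnectedWeight h₃.isConnectedWeight
end
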